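/- If q ≥ ns + Σ_{t=1}^{s+1} C(s+1,t)·s·t·(t−1)/2, then there exist ns pairwise distinct elements λ_0, …, λ_{ns−1} ∈ F_q satisfying the local constraints, i.e., det(A_{a,B}) ≠ 0 for every a ∈ {0,…,n/(s+1)−1} and every nonempty subset B ⊆ {0,…,s}. -/

import Mathlib

open Matrix

/-- The `u`-th digit of `i` in base `s`. -/
def digit (s i u : ℕ) : ℕ := i / s ^ u % s

open scoped Classical in
/-- The `z`-th entry of the `(i,j)` block (a length-`t` column vector, `0 ≤ z < t`) of the
block matrix `A_{a,b}^{(t)}`; the group size is `g` (`g = s` for the first construction and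
`g = s + 1` for the second), so the relevant `λ`-index is `a·s·g + b·s + j_a`. -/
noncomputable def Aent {F : Type*} [Field F] (lam : ℕ → F) (s g a b i j z : ℕ) : F :=
  if i = j then lam (a * s * g + b * s + digit s j a) ^ z
  else if digit s i a = b ∧ digit s j a ≠ b ∧ (∀ u, u ≠ a → digit s i u = digit s j u) then
    -(lam (a * s * g + b * s + digit s j a) ^ z)
  else 0

/-- `A_{a,b}^{(t)}` as an `ℓt × ℓ` matrix; row `ρ` encodes block row `ρ / t` and
inner row `ρ % t`. -/
noncomputable def Amat {F : Type*} [Field F] (lam : ℕ → F) (s g ℓ a b t : ℕ) :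
    Matrix (Fin (ℓ * t)) (Fin ℓ) F :=
  Matrix.of fun ρ j => Aent lam s g a b ((ρ : ℕ) / t) (j : ℕ) ((ρ : ℕ) % t)

/-- The `m`-th smallest element of the finite set `B ⊆ ℕ` (junk value `0` if `m ≥ |B|`). -/
def enum (B : Finset ℕ) (m : ℕ) : ℕ := (B.sort (· ≤ ·)).getD m 0

/-- `A_{a,B}^{(t)} = [A_{a,b₁}^{(t)} | ⋯ | A_{a,b_v}^{(t)}]` as an `ℓt × ℓ|B|` matrix:
row `ρ` encodes block row `ρ / t` and inner row `ρ % t`; column `κ` selects the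
`κ / ℓ`-th member of `B` and inner column `κ % ℓ`. -/
noncomputable def AmatB {F : Type*} [Field F] (lam : ℕ → F) (s g ℓ a t : ℕ) (B : Finset ℕ) :
    Matrix (Fin (ℓ * t)) (Fin (ℓ * B.card)) F :=
  Matrix.of fun ρ κ =>
    Aent lam s g a (enum B ((κ : ℕ) / ℓ)) ((ρ : ℕ) / t) ((κ : ℕ) % ℓ) ((ρ : ℕ) % t)

/-- The local (in-group) constraints: every square matrix `A_{a,B}` (for a group index
`a < groups` and a nonempty `B ⊆ {0, …, g-1}`) is invertible. -/
def LocalConstraints {F : Type*} [Field F] (lam : ℕ → F) (s g ℓ groups : ℕ) : Prop :=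
  ∀ a < groups, ∀ B ⊆ Finset.range g, B.Nonempty → (AmatB lam s g ℓ a B.card B).det ≠ 0

/-!
Splitting off the digit in position `a` identifies the block index with a pair
`(e, r)`, and `A_{a,B}` never mixes distinct `r`. Hence it is a block diagonal matrix whose blocks
all equal one `st × st` matrix (`t = |B|`), and it suffices that this one is invertible. Over
indeterminates its determinant is a nonzero polynomial: identifying the indeterminates that share a
`b` turns it into a Vandermonde matrix times matrices of determinant `1`. Each indeterminate
occurs in only one column, with exponent below `t`. The product of all these determinants with the
Vandermonde determinant of all indeterminates thus has small degree in each of them, so it does not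
vanish on a large enough grid; a nonroot gives pairwise distinct parameters.
-/

section Polynomial

open MvPolynomial

variable {σ R : Type*} [CommRing R]

lemma degreeOf_det_le_sum {ι : Type*} [Fintype ι] [DecidableEq ι]
    (M : Matrix ι ι (MvPolynomial σ R)) (p : σ) (D : ι → ℕ)
    (hM : ∀ i j, (M i j).degreeOf p ≤ D j) : M.det.degreeOf p ≤ ∑ j, D j := by
  rw [det_apply']
  refine (degreeOf_sum_le _ _ _).trans (Finset.sup_le fun π _ ↦ ?_)
  rw [← map_intCast (C : R →+* MvPolynomial σ R)]
  calc (C _ * ∏ j, M (π j) j).degreeOf p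
      ≤ (∏ j, M (π j) j).degreeOf p := degreeOf_C_mul_le _ _ _
    _ ≤ ∑ j, (M (π j) j).degreeOf p := degreeOf_prod_le _ _ _
    _ ≤ ∑ j, D j := Finset.sum_le_sum fun j _ ↦ hM _ _

lemma degreeOf_X_pow_le [DecidableEq σ] (p v : σ) (z : ℕ) :
    (X v ^ z : MvPolynomial σ R).degreeOf p ≤ if v = p then z else 0 := by
  split_ifs with h
  · cases subsingleton_or_nontrivial R
    · rw [Subsingleton.elim (X v ^ z) (0 : MvPolynomial σ R), degreeOf_zero]
      exact Nat.zero_le z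
    · rw [h, degreeOf_X_self_pow]
  · rw [degreeOf_X_pow_of_ne z (Ne.symm h)]

lemma degreeOf_det_vandermonde_X_le {N : ℕ} (e : σ ≃ Fin N) (p : σ) :
    (vandermonde fun i ↦ (X (e.symm i) : MvPolynomial σ R)).det.degreeOf p ≤ N - 1 := by
  classical
  rw [← det_transpose]
  calc _ ≤ ∑ j : Fin N, if j = e p then N - 1 else 0 := by
        refine degreeOf_det_le_sum _ p _ fun i j ↦ (degreeOf_X_pow_le p (e.symm j) i).trans ?_
        simp only [Equiv.symm_apply_eq]
        split_ifs <;> omega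
    _ = N - 1 := by simp

lemma exists_injective_eval_ne_zero [IsDomain R] [Fintype σ] {Q : MvPolynomial σ R} (hQ : Q ≠ 0)
    (S : Finset R) (hS : ∀ p, Fintype.card σ + Q.degreeOf p ≤ S.card) :
    ∃ x : σ → R, Function.Injective x ∧ (∀ p, x p ∈ S) ∧ eval x Q ≠ 0 := by
  let e := Fintype.equivFin σ
  let V : MvPolynomial σ R := (vandermonde fun i ↦ X (e.symm i)).det
  have hV : V ≠ 0 := det_vandermonde_ne_zero_iff.mpr (X_injective.comp e.symm.injective)
  have degreeOf_lt (p : σ) : (V * Q).degreeOf p < S.card := by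
    have hmul := degreeOf_mul_le p V Q
    have hdet : V.degreeOf p ≤ Fintype.card σ - 1 := degreeOf_det_vandermonde_X_le e p
    have hpos : 0 < Fintype.card σ := Fintype.card_pos_iff.mpr ⟨p⟩
    have := hS p
    omega
  obtain ⟨x, hxS, hx⟩ : ∃ x : σ → R, (∀ p, x p ∈ S) ∧ eval x (V * Q) ≠ 0 := by
    by_contra! hzero
    exact mul_ne_zero hV hQ
      (eq_zero_of_eval_zero_at_prod_finset _ (fun _ ↦ S) degreeOf_lt hzero)
  rw [map_mul] at hx
  have hxV : (vandermonde (x ∘ e.symm)).det ≠ 0 := by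
    convert left_ne_zero_of_mul hx using 1
    rw [RingHom.map_det]
    congr 1
    ext i j
    simp [vandermonde_apply]
  have hinj := (det_vandermonde_ne_zero_iff.mp hxV).comp e.injective
  exact ⟨x, by simpa [Function.comp_assoc] using hinj, hxS, right_ne_zero_of_mul hx⟩

end Polynomial

section KernelMatrix

variable {R : Type*} [CommRing R] {s t : ℕ}

/-- The sign pattern of the kernel matrix `K_{a,b}`: its blocks with the columns `L` and the
identity factors `I_{s^a}` removed. The index `b` may be `≥ s`, and then this is the identity. -/
def kernelSign (R : Type*) [CommRing R] (s b : ℕ) : Matrix (Fin s) (Fin s) R :=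
  of fun i j ↦ if i = j then 1 else if (i : ℕ) = b then -1 else 0

/-- The block repeated along the diagonal of `A_{a,B}`: the concatenation, for `c < t = |B|`, of the
matrices `K_{0,β c}` in which the column `(j, c)` carries the powers of the parameter `w (j, c)`. -/
def kernelMatrix (β : Fin t → ℕ) (w : Fin s × Fin t → R) :
    Matrix (Fin s × Fin t) (Fin s × Fin t) R :=
  of fun r c ↦ kernelSign R s (β c.2) r.1 c.1 * w c ^ (r.2 : ℕ)

lemma det_kernelSign (b : ℕ) : (kernelSign R s b).det = 1 := by
  by_cases hb : b < s
  · let i₀ : Fin s := ⟨b, hb⟩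
    let coeff : Fin s → R := fun k ↦ if k = i₀ then 1 else -1
    have hrow : kernelSign R s b =
        (1 : Matrix (Fin s) (Fin s) R).updateRow i₀ (∑ k, coeff k • (1 : Matrix _ _ R) k) := by
      ext i j
      by_cases hi : i = i₀
      · subst hi
        have hj : (∑ k, coeff k • (1 : Matrix (Fin s) (Fin s) R) k) j = coeff j := by
          simp only [Finset.sum_apply, Pi.smul_apply, one_apply, smul_eq_mul, mul_ite, mul_one,
            mul_zero, Finset.sum_ite_eq', Finset.mem_univ, if_true]
        rw [updateRow_self, hj]
        simp [kernelSign, coeff, i₀, eq_comm]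
      · have : (i : ℕ) ≠ b := fun h ↦ hi (Fin.ext h)
        simp [kernelSign, hi, this, one_apply]
    rw [hrow, det_updateRow_sum]
    simp [coeff]
  · have hone : kernelSign R s b = 1 := by
      ext i j
      have : (i : ℕ) ≠ b := by omega
      simp [kernelSign, this, one_apply]
    rw [hone, det_one]

open scoped Kronecker in
lemma kernelMatrix_of_snd (β : Fin t → ℕ) (μ : Fin t → R) :
    kernelMatrix (s := s) β (fun p ↦ μ p.2) =
      ((1 : Matrix (Fin s) (Fin s) R) ⊗ₖ (vandermonde μ)ᵀ) *
        blockDiagonal fun c ↦ kernelSign R s (β c) := by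
  ext ⟨i, z⟩ ⟨j, c⟩
  simp [kernelMatrix, mul_apply, Fintype.sum_prod_type, blockDiagonal_apply, one_apply,
    vandermonde_apply, mul_comm]

lemma det_kernelMatrix_of_snd (β : Fin t → ℕ) (μ : Fin t → R) :
    (kernelMatrix (s := s) β fun p ↦ μ p.2).det = (vandermonde μ).det ^ s := by
  simp [kernelMatrix_of_snd, det_kronecker, det_kernelSign]

lemma map_det_kernelMatrix {R' : Type*} [CommRing R'] (f : R →+* R') (β : Fin t → ℕ)
    (w : Fin s × Fin t → R) : f (kernelMatrix β w).det = (kernelMatrix β (f ∘ w)).det := by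
  rw [RingHom.map_det]
  congr 1
  ext r c
  simp [kernelMatrix, kernelSign, apply_ite f]

open MvPolynomial

variable {σ : Type*}

lemma det_kernelMatrix_X_ne_zero [IsDomain R] {τ : Type*} (β : Fin t → ℕ) (v : Fin s × Fin t → σ)
    (group : σ → τ) (b : Fin t → τ) (hb : Function.Injective b) (hv : ∀ p, group (v p) = b p.2) :
    (kernelMatrix β fun p ↦ (X (v p) : MvPolynomial σ R)).det ≠ 0 := by
  suffices hrename : rename (R := R) group (kernelMatrix β fun p ↦ X (v p)).det ≠ 0 from
    fun h ↦ hrename (by rw [h, map_zero])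
  have hdet : rename (R := R) group (kernelMatrix β fun p ↦ X (v p)).det =
      (vandermonde fun c ↦ (X (b c) : MvPolynomial τ R)).det ^ s := by
    rw [← det_kernelMatrix_of_snd β, ← AlgHom.coe_toRingHom, map_det_kernelMatrix]
    congr 2
    funext p
    simp [hv]
  rw [hdet]
  exact pow_ne_zero s (det_vandermonde_ne_zero_iff.mpr (X_injective.comp hb))

open scoped Classical in
lemma degreeOf_det_kernelMatrix_X_le (β : Fin t → ℕ) (v : Fin s × Fin t → σ)
    (hv : Function.Injective v) (p : σ) :
    (kernelMatrix β fun c ↦ (X (v c) : MvPolynomial σ R)).det.degreeOf p ≤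
      if p ∈ Set.range v then t - 1 else 0 := by
  have hcolumn (r c : Fin s × Fin t) :
      (kernelMatrix β (fun c ↦ (X (v c) : MvPolynomial σ R)) r c).degreeOf p ≤
        if v c = p then t - 1 else 0 := by
    have hpow : (X (v c) ^ (r.2 : ℕ) : MvPolynomial σ R).degreeOf p ≤
        if v c = p then t - 1 else 0 := by
      refine (degreeOf_X_pow_le p (v c) r.2).trans ?_
      split_ifs <;> omega
    refine le_trans ?_ hpow
    simp only [kernelMatrix, kernelSign, of_apply, ite_mul, one_mul, neg_mul, zero_mul]
    split_ifs <;> simp [degreeOf_neg]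
  refine (degreeOf_det_le_sum _ p _ hcolumn).trans ?_
  split_ifs with hp
  · obtain ⟨c₀, rfl⟩ := hp
    simp [hv.eq_iff]
  · have hne (c : Fin s × Fin t) : v c ≠ p := fun h ↦ hp ⟨c, h⟩
    simp [hne]

end KernelMatrix

section BlockDiagonal

variable {s m : ℕ}

lemma digit_eq_zero_of_lt {i u : ℕ} (hi : i < s ^ u) : digit s i u = 0 := by
  rw [digit, Nat.div_eq_of_lt hi, Nat.zero_mod]

lemma digit_finFunctionFinEquiv (f : Fin m → Fin s) (u : Fin m) :
    digit s (finFunctionFinEquiv f) u = f u :=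
  congrArg Fin.val (congrFun (finFunctionFinEquiv.symm_apply_apply f) u)

/-- The numbers below `s ^ m`, split into their digit in position `a` and their remaining digits;
this is the index change that makes `A_{a,B}` block diagonal. -/
def digitSplit (s : ℕ) (a : Fin m) : Fin s × ({u // u ≠ a} → Fin s) ≃ Fin (s ^ m) :=
  (Equiv.funSplitAt a (Fin s)).symm.trans finFunctionFinEquiv

lemma digit_digitSplit_self (a : Fin m) (p : Fin s × ({u // u ≠ a} → Fin s)) :
    digit s (digitSplit s a p) a = p.1 := by
  rw [digitSplit, Equiv.trans_apply, digit_finFunctionFinEquiv]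
  simp [Equiv.funSplitAt, Equiv.piSplitAt]

lemma digit_digitSplit_of_ne (a : Fin m) (p : Fin s × ({u // u ≠ a} → Fin s)) (u : {u // u ≠ a}) :
    digit s (digitSplit s a p) (u : Fin m) = p.2 u := by
  rw [digitSplit, Equiv.trans_apply, digit_finFunctionFinEquiv]
  simp [Equiv.funSplitAt, Equiv.piSplitAt, u.2]

lemma forall_ne_digit_digitSplit_eq_iff (a : Fin m) (p q : Fin s × ({u // u ≠ a} → Fin s)) :
    (∀ u, u ≠ (a : ℕ) → digit s (digitSplit s a p) u = digit s (digitSplit s a q) u) ↔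
      p.2 = q.2 := by
  constructor
  · intro h
    funext u
    have := h u (Fin.val_ne_of_ne u.2)
    rwa [digit_digitSplit_of_ne, digit_digitSplit_of_ne, Fin.val_inj] at this
  · intro h u hu
    by_cases hum : u < m
    · let u' : {u : Fin m // u ≠ a} := ⟨⟨u, hum⟩, fun h ↦ hu (congrArg Fin.val h)⟩
      exact (digit_digitSplit_of_ne a p u').trans (h ▸ (digit_digitSplit_of_ne a q u').symm)
    · have hlt (x : Fin (s ^ m)) : (x : ℕ) < s ^ u :=
        x.2.trans_le (Nat.pow_le_pow_right p.1.pos (not_lt.mp hum))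
      rw [digit_eq_zero_of_lt (hlt _), digit_eq_zero_of_lt (hlt _)]

variable {F : Type*} [Field F]

lemma Aent_digitSplit (lam : ℕ → F) (g b : ℕ) (a : Fin m)
    (p q : Fin s × ({u // u ≠ a} → Fin s)) (z : ℕ) :
    Aent lam s g a b (digitSplit s a p) (digitSplit s a q) z =
      if p.2 = q.2 then kernelSign F s b p.1 q.1 * lam (a * s * g + b * s + q.1) ^ z else 0 := by
  simp only [Aent, forall_ne_digit_digitSplit_eq_iff, digit_digitSplit_self, Fin.val_inj,
    EmbeddingLike.apply_eq_iff_eq, Prod.ext_iff, kernelSign, of_apply]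
  by_cases hr : p.2 = q.2
  · by_cases he : p.1 = q.1
    · simp [hr, he]
    · have hne : (p.1 : ℕ) ≠ q.1 := Fin.val_ne_of_ne he
      by_cases hb : (p.1 : ℕ) = b
      · simp [hr, he, hb, (hb ▸ hne).symm]
      · simp [hr, he, hb]
  · simp [hr]

lemma finProdFinEquiv_div {k l : ℕ} (p : Fin k × Fin l) : (finProdFinEquiv p : ℕ) / l = p.1 :=
  congrArg (fun q ↦ (q.1 : ℕ)) (finProdFinEquiv.symm_apply_apply p)

lemma finProdFinEquiv_mod {k l : ℕ} (p : Fin k × Fin l) : (finProdFinEquiv p : ℕ) % l = p.2 :=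
  congrArg (fun q ↦ (q.2 : ℕ)) (finProdFinEquiv.symm_apply_apply p)

/-- Row or column indices of the square matrix `A_{a,B}` with `t = |B|`, before their encoding as
numbers: the third coordinate `r` selects the diagonal block, the first two an index inside it. -/
def blockIndexEquiv (s t : ℕ) (a : Fin m) :
    (Fin s × Fin t) × ({u // u ≠ a} → Fin s) ≃ Fin (s ^ m) × Fin t where
  toFun p := (digitSplit s a (p.1.1, p.2), p.1.2)
  invFun p := ((((digitSplit s a).symm p.1).1, p.2), ((digitSplit s a).symm p.1).2)
  left_inv p := by simp
  right_inv p := by simp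

/-- `blockIndexEquiv` followed by the row encoding of `AmatB`, in which the block row is the
quotient by `t`. -/
def rowEquiv (s t : ℕ) (a : Fin m) :
    (Fin s × Fin t) × ({u // u ≠ a} → Fin s) ≃ Fin (s ^ m * t) :=
  (blockIndexEquiv s t a).trans finProdFinEquiv

/-- `blockIndexEquiv` followed by the column encoding of `AmatB`, in which the position in `B` is
the quotient by `ℓ`. -/
def columnEquiv (s t : ℕ) (a : Fin m) :
    (Fin s × Fin t) × ({u // u ≠ a} → Fin s) ≃ Fin (s ^ m * t) :=
  (blockIndexEquiv s t a).trans
    ((Equiv.prodComm _ _).trans (finProdFinEquiv.trans (finCongr (mul_comm _ _))))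

lemma AmatB_submatrix_eq_blockDiagonal (lam : ℕ → F) (g : ℕ) (a : Fin m) (B : Finset ℕ) :
    (AmatB lam s g (s ^ m) a B.card B).submatrix (rowEquiv s B.card a) (columnEquiv s B.card a) =
      blockDiagonal fun _ ↦ kernelMatrix (fun c : Fin B.card ↦ enum B c)
        fun p ↦ lam (a * s * g + enum B p.2 * s + p.1) := by
  ext ⟨⟨e, z⟩, r⟩ ⟨⟨j, c⟩, r'⟩
  simp [AmatB, rowEquiv, columnEquiv, blockIndexEquiv, kernelMatrix, blockDiagonal_apply,
    -finProdFinEquiv_apply_val, finProdFinEquiv_div, finProdFinEquiv_mod, Aent_digitSplit]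

lemma det_AmatB_ne_zero (lam : ℕ → F) (g : ℕ) (a : Fin m) (B : Finset ℕ)
    (h : (kernelMatrix (fun c : Fin B.card ↦ enum B c)
      fun p : Fin s × Fin B.card ↦ lam (a * s * g + enum B p.2 * s + p.1)).det ≠ 0) :
    (AmatB lam s g (s ^ m) a B.card B).det ≠ 0 := by
  rw [← isUnit_iff_ne_zero, ← isUnit_iff_isUnit_det,
    ← isUnit_submatrix_equiv (rowEquiv s B.card a) (columnEquiv s B.card a),
    AmatB_submatrix_eq_blockDiagonal, isUnit_iff_isUnit_det, det_blockDiagonal, isUnit_iff_ne_zero]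
  exact Finset.prod_ne_zero_iff.mpr fun _ _ ↦ h

end BlockDiagonal

section Parameters

variable {m g s : ℕ}

lemma enum_eq_orderEmbOfFin (B : Finset ℕ) (c : Fin B.card) :
    enum B c = B.orderEmbOfFin rfl c := by
  rw [enum, List.getD_eq_getElem _ _ (by simp), Finset.orderEmbOfFin_apply]
  rfl

/-- `enum B`, for `B ⊆ {0, …, g - 1}`, with values in `Fin g`. -/
def enumFin (B : (Finset.range g).powerset) (c : Fin B.1.card) : Fin g :=
  ⟨enum B c, by
    rw [enum_eq_orderEmbOfFin]
    exact Finset.mem_range.mp (Finset.mem_powerset.mp B.2 (B.1.orderEmbOfFin_mem rfl c))⟩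

lemma enumFin_injective (B : (Finset.range g).powerset) : Function.Injective (enumFin B) := by
  intro c c' h
  have henum : enum B c = enum B c' := congrArg Fin.val h
  simpa only [enum_eq_orderEmbOfFin, EmbeddingLike.apply_eq_iff_eq] using henum

/-- The index of the parameter `λ` that belongs to group `a`, element `b` and digit `j`,
where `p = (a, b, j)`. -/
def paramIndex (p : Fin m × Fin g × Fin s) : ℕ := p.1 * s * g + p.2.1 * s + p.2.2

lemma paramIndex_eq_finProdFinEquiv (p : Fin m × Fin g × Fin s) :
    paramIndex p = finProdFinEquiv (p.1, finProdFinEquiv p.2) := by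
  simp only [paramIndex, finProdFinEquiv_apply_val]
  ring

lemma paramIndex_injective : Function.Injective (paramIndex : Fin m × Fin g × Fin s → ℕ) := by
  intro p q h
  simpa [paramIndex_eq_finProdFinEquiv, -finProdFinEquiv_apply_val, Fin.val_inj, Prod.ext_iff]
    using h

lemma exists_paramIndex_eq {i : ℕ} (hi : i < g * m * s) :
    ∃ p : Fin m × Fin g × Fin s, paramIndex p = i := by
  have hi' : i < m * (g * s) := by rwa [← mul_assoc, mul_comm m g]
  obtain ⟨⟨a, k⟩, hak⟩ := finProdFinEquiv.surjective ⟨i, hi'⟩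
  obtain ⟨p, rfl⟩ := finProdFinEquiv.surjective k
  exact ⟨(a, p), by rw [paramIndex_eq_finProdFinEquiv, hak]⟩

/-- The parameter `(a, b, j)` in column `(j, c)` of the blocks of `A_{a,B}`; here `b` is the `c`-th
element of `B`. -/
def blockParam (a : Fin m) (B : (Finset.range g).powerset) (p : Fin s × Fin B.1.card) :
    Fin m × Fin g × Fin s :=
  (a, enumFin B p.2, p.1)

lemma blockParam_injective (a : Fin m) (B : (Finset.range g).powerset) :
    Function.Injective (blockParam a B : Fin s × Fin B.1.card → Fin m × Fin g × Fin s) := by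
  rintro ⟨j, c⟩ ⟨j', c'⟩ h
  simp only [blockParam, Prod.mk.injEq, true_and, (enumFin_injective B).eq_iff] at h
  rw [h.1, h.2]

end Parameters

section LocalPolynomial

open MvPolynomial

variable {R : Type*} [CommRing R] {m g s : ℕ}

/-- The polynomial in the parameters whose nonvanishing gives the local constraints: the
product over `a` and `B` of the determinants of the blocks of `A_{a,B}`. -/
noncomputable def localPolynomial (R : Type*) [CommRing R] (m g s : ℕ) :
    MvPolynomial (Fin m × Fin g × Fin s) R :=
  ∏ a : Fin m, ∏ B : (Finset.range g).powerset,
    (kernelMatrix (fun c ↦ enum B c) fun p ↦ X (blockParam a B p)).det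

lemma localPolynomial_ne_zero [IsDomain R] : localPolynomial R m g s ≠ 0 :=
  Finset.prod_ne_zero_iff.mpr fun a _ ↦ Finset.prod_ne_zero_iff.mpr fun B _ ↦
    det_kernelMatrix_X_ne_zero _ (blockParam a B) (fun p ↦ p.2.1) (enumFin B)
      (enumFin_injective B) fun _ ↦ rfl

lemma sum_powerset_card_pred {α : Type*} (A : Finset α) :
    ∑ B ∈ A.powerset, (B.card - 1) = ∑ t ∈ Finset.Icc 1 A.card, A.card.choose t * (t - 1) := by
  rw [Finset.sum_powerset_apply_card (fun t ↦ t - 1)]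
  symm
  refine Finset.sum_subset (fun t ht ↦ ?_) fun t _ ht ↦ ?_
  · simp only [Finset.mem_Icc, Finset.mem_range] at ht ⊢
    omega
  · obtain rfl | ht : t = 0 ∨ A.card < t := by
      simp only [Finset.mem_Icc] at ht
      omega
    · simp
    · simp [Nat.choose_eq_zero_of_lt ht]

lemma degreeOf_localPolynomial_le (p : Fin m × Fin g × Fin s) :
    (localPolynomial R m g s).degreeOf p ≤ ∑ t ∈ Finset.Icc 1 g, g.choose t * (t - 1) := by
  have hfactor (a : Fin m) (B : (Finset.range g).powerset) :
      (kernelMatrix (fun c ↦ enum B c) fun q ↦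
        (X (blockParam a B q) : MvPolynomial _ R)).det.degreeOf p ≤
        if a = p.1 then B.1.card - 1 else 0 := by
    refine (degreeOf_det_kernelMatrix_X_le _ _ (blockParam_injective a B) p).trans ?_
    by_cases hp : p ∈ Set.range (blockParam a B)
    · obtain ⟨q, rfl⟩ := hp
      simp [blockParam]
    · simp [hp]
  calc (localPolynomial R m g s).degreeOf p
      ≤ ∑ a : Fin m, ∑ B : (Finset.range g).powerset, if a = p.1 then B.1.card - 1 else 0 :=
        (degreeOf_prod_le _ _ _).trans <| Finset.sum_le_sum fun a _ ↦
          (degreeOf_prod_le _ _ _).trans <| Finset.sum_le_sum fun B _ ↦ hfactor a B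
    _ = ∑ B : (Finset.range g).powerset, (B.1.card - 1) := by
        rw [Finset.sum_comm]
        simp
    _ = ∑ t ∈ Finset.Icc 1 g, g.choose t * (t - 1) := by
        rw [Finset.sum_coe_sort (Finset.range g).powerset (fun B ↦ B.card - 1),
          sum_powerset_card_pred, Finset.card_range]

lemma localConstraints_of_eval_localPolynomial_ne_zero {F : Type*} [Field F] (lam : ℕ → F)
    (h : eval (lam ∘ paramIndex) (localPolynomial F m g s) ≠ 0) :
    LocalConstraints lam s g (s ^ m) m := by
  intro a ha B hB _
  rw [localPolynomial, map_prod, Finset.prod_ne_zero_iff] at h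
  have ha' := h ⟨a, ha⟩ (Finset.mem_univ _)
  rw [map_prod, Finset.prod_ne_zero_iff] at ha'
  have hdet := ha' ⟨B, Finset.mem_powerset.mpr hB⟩ (Finset.mem_univ _)
  rw [map_det_kernelMatrix] at hdet
  refine det_AmatB_ne_zero lam g (⟨a, ha⟩ : Fin m) B ?_
  convert hdet using 3
  funext p
  simp [blockParam, enumFin, paramIndex]

end LocalPolynomial

lemma pred_le_mul_mul_pred_div_two {s t : ℕ} (hs : 0 < s) : t - 1 ≤ s * t * (t - 1) / 2 := by
  obtain _ | _ | t := t
  · simp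
  · simp
  · rw [Nat.le_div_iff_mul_le two_pos]
    have : t + 2 ≤ s * (t + 2) := Nat.le_mul_of_pos_left _ hs
    simp only [Nat.add_sub_cancel]
    nlinarith

lemma sum_choose_mul_pred_le {s : ℕ} (hs : 0 < s) (T : Finset ℕ) (g : ℕ) :
    ∑ t ∈ T, g.choose t * (t - 1) ≤ ∑ t ∈ T, g.choose t * (s * t * (t - 1) / 2) :=
  Finset.sum_le_sum fun _ _ ↦ Nat.mul_le_mul_left _ (pred_le_mul_mul_pred_div_two hs)

theorem statement3_general {F : Type*} [Field F] (S : Finset F) (m g s : ℕ)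
    (hS : g * m * s + ∑ t ∈ Finset.Icc 1 g, g.choose t * (t - 1) ≤ S.card) :
    ∃ lam : ℕ → F, (∀ i < g * m * s, lam i ∈ S) ∧ Set.InjOn lam (Set.Iio (g * m * s)) ∧
      LocalConstraints lam s g (s ^ m) m := by
  obtain ⟨x, hx, hxS, hev⟩ := exists_injective_eval_ne_zero
    (localPolynomial_ne_zero (R := F) (m := m) (g := g) (s := s)) S fun p ↦ by
      have hcard : Fintype.card (Fin m × Fin g × Fin s) = g * m * s := by
        simp only [Fintype.card_prod, Fintype.card_fin]
        ring
      exact hcard ▸ (Nat.add_le_add_left (degreeOf_localPolynomial_le p) _).trans hS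
  have hlam : Function.extend paramIndex x 0 ∘ paramIndex = x :=
    Function.extend_comp paramIndex_injective x 0
  refine ⟨Function.extend paramIndex x 0, fun i hi ↦ ?_, fun i hi j hj hij ↦ ?_,
    localConstraints_of_eval_localPolynomial_ne_zero _ (by rwa [hlam])⟩
  · obtain ⟨p, rfl⟩ := exists_paramIndex_eq hi
    rw [paramIndex_injective.extend_apply]
    exact hxS p
  · obtain ⟨p, rfl⟩ := exists_paramIndex_eq hi
    obtain ⟨q, rfl⟩ := exists_paramIndex_eq hj
    rw [paramIndex_injective.extend_apply, paramIndex_injective.extend_apply] at hij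
    rw [hx hij]

/-- Lemma 3 of the paper, second construction, group size `s+1`: if
`q ≥ ns + Σ_{t=1}^{s+1} C(s+1,t)·s·t·(t−1)/2`, then there exist `ns` pairwise distinct
elements `λ_0, …, λ_{ns−1}` of `F_q` satisfying the local constraints
`det(A_{a,B}) ≠ 0` for all `a ∈ [n/(s+1)]` and all nonempty `B ⊆ [s+1]`. -/
theorem statement3 (F : Type*) [Field F] [Fintype F] (q n k d s ℓ : ℕ)
    (hq : Fintype.card F = q)
    (hk : 1 ≤ k) (hkn : k < n) (hd₁ : k + 1 ≤ d) (hd₂ : d ≤ n - 1)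
    (hs : s = d - k + 1) (hdiv : (s + 1) ∣ n) (hℓ : ℓ = s ^ (n / (s + 1)))
    (hbound : n * s + ∑ t ∈ Finset.Icc 1 (s + 1), (s + 1).choose t * (s * t * (t - 1) / 2) ≤ q) :
    ∃ lam : ℕ → F,
      (∀ i < n * s, ∀ j < n * s, lam i = lam j → i = j) ∧
      LocalConstraints lam s (s + 1) ℓ (n / (s + 1)) := by
  obtain ⟨m, rfl⟩ := hdiv
  have hdivm : (s + 1) * m / (s + 1) = m := Nat.mul_div_cancel_left m s.succ_pos
  rw [hdivm] at hℓ ⊢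
  have hsum := sum_choose_mul_pred_le (show 0 < s by omega) (Finset.Icc 1 (s + 1)) (s + 1)
  obtain ⟨lam, -, hinj, hlocal⟩ := statement3_general (Finset.univ : Finset F) m (s + 1) s <| by
    rw [Finset.card_univ, hq]
    exact (Nat.add_le_add_left hsum _).trans hbound
  exact ⟨lam, fun _ hi _ hj ↦ hinj hi hj, hℓ ▸ hlocal⟩
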